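/- For all x ∈ (0, π/2), (1/3)·1/(π/2 − x) − 2/(3π) + (1 − 4/(3π²))·x − (8/(3π³))·x² − (16/(3π⁴))·x³ − (32/(3π⁵))·x⁴ < (2/3)·sin(x) + (1/3)·tan(x) < (1/3)·1/(π/2 − x) − 2/(3π) + (1 − 4/(3π²))·x − (8/(3π³))·x² − (16/(3π⁴))·x³. -/

import Mathlib

open Real

/-!
Put `t = 2 * x / π`, so that `0 < t < 1`. By the geometric series the two bounds say that
`π / 2 * (2 * sin x + tan x - 3 * x)` lies strictly between `t ^ 5 / (1 - t)` and
`t ^ 4 / (1 - t)`. These are `2 * t ^ 5 / (1 - t ^ 2) - t ^ 5 / (1 + t)` and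
`2 * t ^ 5 / (1 - t ^ 2) + t ^ 4 / (1 + t)`, so it suffices that the quantity exceeds
`2 * t ^ 5 / (1 - t ^ 2)` by an amount in `[0, t ^ 5 / 2)`. In the partial fraction expansion
`π / 2 * tan (π * t / 2) = ∑ 2 * t / (m ^ 2 - t ^ 2)` over odd `m`, split off the linear and cubic
part of each term: since `∑ 1 / m ^ 2` and `∑ 1 / m ^ 4` are known, what is left of `m = 1` is
exactly the pole `2 * t ^ 5 / (1 - t ^ 2)`, and the terms with `3 ≤ m` are nonnegative and tiny.
The linear and cubic parts cancel against those of `2 * sin x - 3 * x`, whose remainder the Leibniz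
test bounds.
-/

lemma hasSum_odd_of_hasSum_even {G : Type*} [AddCommGroup G] [TopologicalSpace G]
    [IsTopologicalAddGroup G] {f : ℕ → G} {a b : G} (hf : HasSum f a)
    (heven : HasSum (fun n ↦ f (2 * n)) b) : HasSum (fun n ↦ f (2 * n + 1)) (a - b) := by
  have hinj : Function.Injective (fun n : ℕ ↦ 2 * n) := mul_right_injective₀ two_ne_zero
  have hcompl : (Set.range fun n : ℕ ↦ 2 * n)ᶜ = Set.range fun n : ℕ ↦ 2 * n + 1 := by
    simpa using Nat.isCompl_even_odd.compl_eq
  rw [← add_sub_cancel b a, ← (hinj.hasSum_range_iff.2 heven).hasSum_compl_iff, hcompl] at hf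
  exact ((add_left_injective 1).comp hinj).hasSum_range_iff.1 hf

lemma hasSum_one_div_odd_pow {K : Type*} [Field K] [TopologicalSpace K] [IsTopologicalRing K]
    {k : ℕ} {s : K} (h : HasSum (fun n : ℕ ↦ 1 / (n : K) ^ k) s) :
    HasSum (fun n : ℕ ↦ 1 / (2 * n + 1 : K) ^ k) (s - 1 / 2 ^ k * s) := by
  have heven : HasSum (fun n : ℕ ↦ 1 / ((2 * n : ℕ) : K) ^ k) (1 / 2 ^ k * s) := by
    convert! h.mul_left (1 / 2 ^ k) using 2 with n
    rw [Nat.cast_mul, Nat.cast_ofNat, mul_pow, one_div_mul_one_div]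
  exact_mod_cast hasSum_odd_of_hasSum_even h heven

lemma hasSum_one_div_odd_sq : HasSum (fun n : ℕ ↦ 1 / (2 * n + 1 : ℝ) ^ 2) (π ^ 2 / 8) := by
  convert! hasSum_one_div_odd_pow hasSum_zeta_two using 1
  ring

lemma hasSum_one_div_odd_pow_four :
    HasSum (fun n : ℕ ↦ 1 / (2 * n + 1 : ℝ) ^ 4) (π ^ 4 / 96) := by
  convert! hasSum_one_div_odd_pow hasSum_zeta_four using 1
  ring

open Complex in
lemma hasSum_cot_partial_fractions {z : ℂ} (hz : z ∈ integerComplement) :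
    HasSum (fun n : ℕ ↦ 2 * z / (z ^ 2 - n ^ 2)) (π * cot (π * z) + 1 / z) := by
  have hz0 : z ≠ 0 := integerComplement.ne_zero hz
  have hcot : HasSum (fun n : ℕ ↦ cotTerm z n) (π * cot (π * z) - 1 / z) :=
    (summable_cotTerm hz).hasSum_iff.2 (cot_series_rep' hz).symm
  rw [← hasSum_nat_add_iff' 1]
  convert! hcot using 1
  · ext n
    rw [cotTerm_identity hz, mul_one_div]
    push_cast
    ring
  · rw [Finset.sum_range_one, Nat.cast_zero]
    field_simp
    ring

open Complex in
lemma two_mul_cot_two_mul (z : ℂ) : 2 * cot (2 * z) = cot z - tan z := by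
  rw [Complex.cot, Complex.cot, Complex.tan, Complex.sin_two_mul, Complex.cos_two_mul']
  -- At a zero of `sin` or `cos` both sides are `0`, by the convention `x / 0 = 0`.
  by_cases hsin : sin z = 0
  · simp only [hsin, mul_zero, zero_mul, div_zero, zero_div, sub_zero]
  by_cases hcos : cos z = 0
  · simp only [hcos, mul_zero, div_zero, zero_div, sub_zero]
  field_simp

open Complex in
lemma hasSum_tan_partial_fractions {z : ℂ} (hz : z ∈ integerComplement) :
    HasSum (fun n : ℕ ↦ 2 * z / ((2 * n + 1) ^ 2 - z ^ 2)) (π / 2 * tan (π * z / 2)) := by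
  have hz_half : z / 2 ∈ integerComplement := by
    rintro ⟨n, hn⟩
    exact hz ⟨2 * n, by push_cast; rw [hn]; ring⟩
  have heven : HasSum (fun n : ℕ ↦ 2 * z / (z ^ 2 - (2 * n : ℕ) ^ 2))
      (1 / 2 * (π * cot (π * (z / 2)) + 1 / (z / 2))) := by
    convert! (hasSum_cot_partial_fractions hz_half).mul_left (1 / 2) using 2 with n
    rw [show z ^ 2 - ((2 * n : ℕ) : ℂ) ^ 2 = 4 * ((z / 2) ^ 2 - n ^ 2) by push_cast; ring,
      show 2 * z = 4 * (1 / 2 * (2 * (z / 2))) by ring, mul_div_mul_left _ _ (by norm_num),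
      mul_div_assoc]
  convert! (hasSum_odd_of_hasSum_even (hasSum_cot_partial_fractions hz) heven).neg using 1
  · ext n
    rw [← div_neg, neg_sub]
    push_cast
    rfl
  · rw [show π * z / 2 = π * (z / 2) by ring, show π * z = 2 * (π * (z / 2)) by ring]
    linear_combination (π / 2 : ℂ) * two_mul_cot_two_mul (π * (z / 2))

lemma hasSum_tan_partial_fractions_ofReal {t : ℝ} (ht : (t : ℂ) ∈ Complex.integerComplement) :
    HasSum (fun n : ℕ ↦ 2 * t / ((2 * n + 1) ^ 2 - t ^ 2)) (π / 2 * tan (π * t / 2)) := by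
  rw [← Complex.hasSum_ofReal]
  exact_mod_cast hasSum_tan_partial_fractions ht

lemma hasSum_tan_sub_cubic {t : ℝ} (ht : (t : ℂ) ∈ Complex.integerComplement) :
    HasSum (fun n : ℕ ↦ 2 * t ^ 5 / ((2 * n + 1) ^ 4 * ((2 * n + 1) ^ 2 - t ^ 2)))
      (π / 2 * tan (π * t / 2) - (π ^ 2 / 4 * t + π ^ 4 / 48 * t ^ 3)) := by
  convert! (hasSum_tan_partial_fractions_ofReal ht).sub
    ((hasSum_one_div_odd_sq.mul_left (2 * t)).add
      (hasSum_one_div_odd_pow_four.mul_left (2 * t ^ 3))) using 1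
  · ext n
    have hodd : (2 * n + 1 : ℝ) ≠ 0 := by positivity
    have hpole : (2 * n + 1 : ℝ) ^ 2 - t ^ 2 ≠ 0 := by
      have := Complex.integerComplement_pow_two_ne_pow_two ht (2 * n + 1 : ℕ)
      exact sub_ne_zero.2 fun h ↦ this (by exact_mod_cast h.symm)
    field_simp
    ring
  · ring

lemma tan_sub_cubic_sub_pole_mem_Icc {t : ℝ} (ht : t ∈ Set.Ioo 0 1) :
    π / 2 * tan (π * t / 2) - (π ^ 2 / 4 * t + π ^ 4 / 48 * t ^ 3) - 2 * t ^ 5 / (1 - t ^ 2) ∈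
      Set.Icc 0 (t ^ 5 / 4 * (π ^ 4 / 96 - 1)) := by
  obtain ⟨ht0, ht1⟩ := ht
  have ht_int : (t : ℂ) ∈ Complex.integerComplement := by
    rintro ⟨n, hn⟩
    have hn' : (n : ℝ) = t := by exact_mod_cast hn
    rw [← hn'] at ht0 ht1
    norm_cast at ht0 ht1
    lia
  have htail := (hasSum_nat_add_iff' 1).2 (hasSum_tan_sub_cubic ht_int)
  have hmajorant := ((hasSum_nat_add_iff' 1).2 hasSum_one_div_odd_pow_four).mul_left (t ^ 5 / 4)
  simp only [Finset.sum_range_one, Nat.cast_zero, mul_zero, zero_add, one_pow, one_mul, div_one]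
    at htail hmajorant
  have hden (n : ℕ) : 8 ≤ (2 * (n + 1 : ℕ) + 1 : ℝ) ^ 2 - t ^ 2 := by
    push_cast
    nlinarith [n.cast_nonneg (α := ℝ)]
  refine ⟨htail.nonneg fun n ↦ ?_, hasSum_le (fun n ↦ ?_) htail hmajorant⟩
  · have := hden n
    positivity
  · calc 2 * t ^ 5 / ((2 * (n + 1 : ℕ) + 1) ^ 4 * ((2 * (n + 1 : ℕ) + 1) ^ 2 - t ^ 2))
        ≤ 2 * t ^ 5 / ((2 * (n + 1 : ℕ) + 1) ^ 4 * 8) := by gcongr; exact hden n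
      _ = t ^ 5 / 4 * (1 / (2 * (n + 1 : ℕ) + 1) ^ 4) := by field_simp; norm_num

lemma sin_le_alternating_sum {x : ℝ} (hx : 0 ≤ x) (hx6 : x ^ 2 ≤ 6) (k : ℕ) :
    sin x ≤ ∑ i ∈ Finset.range (2 * k + 1),
      (-1) ^ i * (x ^ (2 * i + 1) / (2 * i + 1).factorial) := by
  refine Antitone.tendsto_le_alternating_series ?_ (antitone_nat_of_succ_le fun n ↦ ?_) k
  · simpa only [mul_div_assoc] using (hasSum_sin x).tendsto_sum_nat
  · have hratio : x ^ 2 ≤ (2 * n + 3) * (2 * n + 2) := by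
      nlinarith [n.cast_nonneg (α := ℝ)]
    rw [div_le_div_iff₀ (by positivity) (by positivity),
      show 2 * (n + 1) + 1 = 2 * n + 1 + 1 + 1 by ring, Nat.factorial_succ (2 * n + 1 + 1),
      Nat.factorial_succ (2 * n + 1)]
    push_cast
    calc x ^ (2 * n + 1 + 1 + 1) * (2 * n + 1).factorial
        = x ^ (2 * n + 1) * (x ^ 2 * (2 * n + 1).factorial) := by ring
      _ ≤ x ^ (2 * n + 1) * ((2 * n + 3) * (2 * n + 2) * (2 * n + 1).factorial) := by gcongr
      _ = _ := by ring

lemma sin_le_quintic {x : ℝ} (hx : 0 ≤ x) (hx6 : x ^ 2 ≤ 6) :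
    sin x ≤ x - x ^ 3 / 6 + x ^ 5 / 120 := by
  convert! sin_le_alternating_sum hx hx6 1 using 1
  norm_num [Finset.sum_range_succ, Nat.factorial]
  ring

lemma huygens_sub_pole_mem_Ico {t : ℝ} (ht : t ∈ Set.Ioo 0 1) :
    π / 2 * (2 * sin (π * t / 2) + tan (π * t / 2) - 3 * (π * t / 2)) - 2 * t ^ 5 / (1 - t ^ 2) ∈
      Set.Ico 0 (t ^ 5 / 2) := by
  obtain ⟨htan_lower, htan_upper⟩ := tan_sub_cubic_sub_pole_mem_Icc ht
  obtain ⟨ht0, ht1⟩ := ht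
  have hx : 0 ≤ π * t / 2 := by positivity
  have hx6 : (π * t / 2) ^ 2 ≤ 6 := by
    nlinarith [mul_lt_of_lt_one_right pi_pos ht1, pi_lt_d2]
  have hsin_lower := mul_le_mul_of_nonneg_left (sin_ge_sub_cube hx) pi_pos.le
  have hsin_upper := mul_le_mul_of_nonneg_left (sin_le_quintic hx hx6) pi_pos.le
  have hconst : π ^ 6 / 3840 + (π ^ 4 / 96 - 1) / 4 < 1 / 2 := by
    calc π ^ 6 / 3840 + (π ^ 4 / 96 - 1) / 4
        ≤ 3.15 ^ 6 / 3840 + (3.15 ^ 4 / 96 - 1) / 4 := by gcongr <;> exact pi_lt_d2.le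
      _ < 1 / 2 := by norm_num
  constructor
  · linarith
  · linarith [mul_lt_mul_of_pos_left hconst (pow_pos ht0 5)]

lemma huygens_mem_Ioo {t : ℝ} (ht : t ∈ Set.Ioo 0 1) :
    π / 2 * (2 * sin (π * t / 2) + tan (π * t / 2) - 3 * (π * t / 2)) ∈
      Set.Ioo (t ^ 5 / (1 - t)) (t ^ 4 / (1 - t)) := by
  obtain ⟨hlower, hupper⟩ := huygens_sub_pole_mem_Ico ht
  obtain ⟨ht0, ht1⟩ := ht
  have hsub : 1 - t ≠ 0 := by linarith
  have hadd : 1 + t ≠ 0 := by linarith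
  have hpole : 1 - t ^ 2 = (1 - t) * (1 + t) := by ring
  have hsplit_lower : t ^ 5 / (1 - t) = 2 * t ^ 5 / (1 - t ^ 2) - t ^ 5 / (1 + t) := by
    rw [hpole]
    field_simp
    ring
  have hsplit_upper : t ^ 4 / (1 - t) = 2 * t ^ 5 / (1 - t ^ 2) + t ^ 4 / (1 + t) := by
    rw [hpole]
    field_simp
    ring
  have hpos : 0 < t ^ 5 / (1 + t) := by positivity
  have hhalf : t ^ 5 / 2 ≤ t ^ 4 / (1 + t) := by
    rw [div_le_div_iff₀ two_pos (by linarith)]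
    calc t ^ 5 * (1 + t) = t ^ 4 * (t * (1 + t)) := by ring
      _ ≤ t ^ 4 * 2 := by gcongr; nlinarith
  constructor <;> linarith

theorem huygens_rational_bounds (x : ℝ) (hx : x ∈ Set.Ioo 0 (π / 2)) :
    (1 / 3) * (1 / (π / 2 - x)) - 2 / (3 * π) + (1 - 4 / (3 * π ^ 2)) * x -
        (8 / (3 * π ^ 3)) * x ^ 2 - (16 / (3 * π ^ 4)) * x ^ 3 - (32 / (3 * π ^ 5)) * x ^ 4 <
      (2 / 3) * sin x + (1 / 3) * tan x ∧
    (2 / 3) * sin x + (1 / 3) * tan x <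
      (1 / 3) * (1 / (π / 2 - x)) - 2 / (3 * π) + (1 - 4 / (3 * π ^ 2)) * x -
        (8 / (3 * π ^ 3)) * x ^ 2 - (16 / (3 * π ^ 4)) * x ^ 3 := by
  obtain ⟨t, rfl⟩ : ∃ t, x = π * t / 2 := ⟨2 * x / π, by field_simp⟩
  have ht : t ∈ Set.Ioo 0 1 := by
    obtain ⟨hx0, hx1⟩ := hx
    constructor <;> nlinarith [pi_pos]
  obtain ⟨hlower, hupper⟩ := huygens_mem_Ioo ht
  have hsub : 1 - t ≠ 0 := by linarith [ht.2]
  have hgap : π / 2 - π * t / 2 = π / 2 * (1 - t) := by ring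
  have hhuygens : 2 / 3 * sin (π * t / 2) + 1 / 3 * tan (π * t / 2) = π * t / 2 + 2 / (3 * π) *
      (π / 2 * (2 * sin (π * t / 2) + tan (π * t / 2) - 3 * (π * t / 2))) := by
    field_simp
    ring
  rw [hhuygens, hgap]
  constructor
  · calc _ = π * t / 2 + 2 / (3 * π) * (t ^ 5 / (1 - t)) := by field_simp; ring
      _ < _ := by gcongr
  · calc _ < π * t / 2 + 2 / (3 * π) * (t ^ 4 / (1 - t)) := by gcongr
      _ = _ := by field_simp; ring
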